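/- (Proposition 3: zero volumetric charges remain optimal under uncertainty.) The expected optimal value function EV is convex on the rate set 𝒯, and EV(τb, τs) ≤ EV(0, 0) for every (τb, τs) ∈ 𝒯; that is, max_{(τb,τs)∈𝒯} EV(τb, τs) = EV(0, 0), regardless of the probability distribution of the random data. -/

import Mathlib

/-- A lower-level decision vector `x = (d, l, zs, zb, g, (g_{ih}), y)`. -/
structure LVec (N : ℕ) (H : Fin N → Type) where
  d : Fin N → ℝ
  l : Fin N → ℝ
  zs : Fin N → ℝ
  zb : Fin N → ℝ
  g : Fin N → ℝ
  gih : (i : Fin N) → H i → ℝ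
  y : Fin N → ℝ

/-- The lower-level feasible set `X`. -/
def FeasX {N K : ℕ} {H : Fin N → Type} [∀ i, Fintype (H i)]
    (R Gp : Fin N → ℝ) (Gcap : (i : Fin N) → H i → ℝ)
    (T : Fin K → ℝ) (PTDF : Fin K → Fin N → ℝ) (x : LVec N H) : Prop :=
  (∀ i, 0 ≤ x.d i) ∧ (∀ i, 0 ≤ x.l i) ∧ (∀ i, 0 ≤ x.zs i) ∧ (∀ i, 0 ≤ x.zb i) ∧
  (∀ i, 0 ≤ x.g i) ∧ (∀ i (h : H i), 0 ≤ x.gih i h) ∧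
  (∀ i, x.l i + x.zs i - x.zb i - x.g i - R i = 0) ∧
  (∀ i, x.g i ≤ Gp i) ∧
  (∀ i (h : H i), x.gih i h ≤ Gcap i h) ∧
  (∑ i, x.y i = 0) ∧
  (∀ k, -T k ≤ ∑ i, PTDF k i * x.y i ∧ ∑ i, PTDF k i * x.y i ≤ T k) ∧
  (∀ i, x.y i - (∑ h, x.gih i h) - (x.zs i - x.zb i) + x.d i = 0)

/-- The social surplus `Π(x; τb, τs)`. -/
noncomputable def surplus {N : ℕ} {H : Fin N → Type} [∀ i, Fintype (H i)]
    (P0 Q0 α : Fin N → ℝ) (Cg : Fin N → ℝ → ℝ) (a A : (i : Fin N) → H i → ℝ)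
    (τb τs : ℝ) (x : LVec N H) : ℝ :=
  (∑ i, ((∫ m in (0:ℝ)..x.d i, (P0 i - (P0 i / ((1 - α i) * Q0 i)) * m)) - τb * x.d i))
  + (∑ i, (τs * x.zs i - τb * x.zb i
      + (∫ m in (0:ℝ)..x.l i, (P0 i - (P0 i / (α i * Q0 i)) * m)) - Cg i (x.g i)))
  - ∑ i, ∑ h, (a i h * x.gih i h + (1 / 2) * A i h * (x.gih i h) ^ 2)

/-- The optimal value function `V(τb, τs)` (as a real-valued supremum). -/
noncomputable def Vval {N K : ℕ} {H : Fin N → Type} [∀ i, Fintype (H i)]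
    (P0 Q0 α : Fin N → ℝ) (Cg : Fin N → ℝ → ℝ) (a A Gcap : (i : Fin N) → H i → ℝ)
    (R Gp : Fin N → ℝ) (T : Fin K → ℝ) (PTDF : Fin K → Fin N → ℝ)
    (τ : ℝ × ℝ) : ℝ :=
  sSup ((fun x => surplus P0 Q0 α Cg a A τ.1 τ.2 x) ''
    {x : LVec N H | FeasX R Gp Gcap T PTDF x})

/-- The rate set `𝒯`. -/
def Tset (τhat τlow : ℝ) : Set (ℝ × ℝ) :=
  {τ | 0 ≤ τ.1 ∧ τ.1 ≤ τhat ∧ τlow ≤ τ.2 ∧ τ.2 ≤ τ.1}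

open MeasureTheory

theorem surplus_affine {N : ℕ} {H : Fin N → Type} [∀ i, Fintype (H i)]
    (P0 Q0 α : Fin N → ℝ) (Cg : Fin N → ℝ → ℝ) (a A : (i : Fin N) → H i → ℝ)
    (τb τs : ℝ) (x : LVec N H) :
    surplus P0 Q0 α Cg a A τb τs x = surplus P0 Q0 α Cg a A 0 0 x
      + (τs * (∑ i, x.zs i) - τb * (∑ i, x.zb i) - τb * (∑ i, x.d i)) := by
  simp only [surplus, Finset.sum_sub_distrib, Finset.sum_add_distrib, ← Finset.mul_sum]
  ring

theorem surplus_le_zero {N K : ℕ} {H : Fin N → Type} [∀ i, Fintype (H i)]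
    (P0 Q0 α : Fin N → ℝ) (Cg : Fin N → ℝ → ℝ) (a A Gcap : (i : Fin N) → H i → ℝ)
    (R Gp : Fin N → ℝ) (T : Fin K → ℝ) (PTDF : Fin K → Fin N → ℝ)
    (τb τs : ℝ) (h0 : 0 ≤ τb) (h1 : τs ≤ τb) (x : LVec N H)
    (hx : FeasX R Gp Gcap T PTDF x) :
    surplus P0 Q0 α Cg a A τb τs x ≤ surplus P0 Q0 α Cg a A 0 0 x := by
  obtain ⟨hd, hl, hzs, hzb, hg, hgih, hbal, hgc, hgihc, hy, hk, hn⟩ := hx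
  rw [surplus_affine]
  have e : ∑ i, (x.y i - (∑ h, x.gih i h) - (x.zs i - x.zb i) + x.d i) = 0 :=
    Finset.sum_eq_zero fun i _ => hn i
  simp only [Finset.sum_sub_distrib, Finset.sum_add_distrib] at e
  have hG : 0 ≤ ∑ i, ∑ h, x.gih i h :=
    Finset.sum_nonneg fun i _ => Finset.sum_nonneg fun h _ => hgih i h
  have hZ : 0 ≤ ∑ i, x.zs i := Finset.sum_nonneg fun i _ => hzs i
  have p1 := mul_le_mul_of_nonneg_right h1 hZ
  have p2 := mul_nonneg h0 hG
  have e2 : ∑ i, ∑ h, x.gih i h = (∑ i, x.zb i) + (∑ i, x.d i) - ∑ i, x.zs i := by linarith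
  rw [e2] at p2
  nlinarith

theorem quad_int_le (p c d : ℝ) (hc : 0 < c) :
    ∫ m in (0:ℝ)..d, (p - c * m) ≤ p ^ 2 / (2 * c) := by
  have : ∫ m in (0:ℝ)..d, (p - c * m) = p * d - c * (d ^ 2 / 2) := by
    have h1 : IntervalIntegrable (fun _ : ℝ => p) volume 0 d :=
      continuous_const.intervalIntegrable _ _
    have h2 : IntervalIntegrable (fun m : ℝ => c * m) volume 0 d :=
      Continuous.intervalIntegrable (by fun_prop) _ _
    rw [intervalIntegral.integral_sub h1 h2, intervalIntegral.integral_const_mul,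
      intervalIntegral.integral_const, integral_id, smul_eq_mul]
    ring
  rw [this, le_div_iff₀ (by positivity)]
  nlinarith [sq_nonneg (p - c * d)]

theorem surplus_zero_bdd {N K : ℕ} {H : Fin N → Type} [∀ i, Fintype (H i)]
    (P0 Q0 α : Fin N → ℝ) (Cg : Fin N → ℝ → ℝ) (a A Gcap : (i : Fin N) → H i → ℝ)
    (R Gp : Fin N → ℝ) (T : Fin K → ℝ) (PTDF : Fin K → Fin N → ℝ)
    (hP0 : ∀ i, 0 < P0 i) (hQ0 : ∀ i, 0 < Q0 i)
    (hα0 : ∀ i, 0 < α i) (hα1 : ∀ i, α i < 1)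
    (hCg : ∀ i, Continuous (Cg i))
    (ha : ∀ i (h : H i), 0 < a i h) (hA : ∀ i (h : H i), 0 < A i h) :
    ∃ B, ∀ x : LVec N H, FeasX R Gp Gcap T PTDF x →
      surplus P0 Q0 α Cg a A 0 0 x ≤ B := by
  have hb : ∀ i, ∃ m, ∀ g ∈ Set.Icc 0 (Gp i), m ≤ Cg i g := by
    intro i
    obtain ⟨m, hm⟩ := (isCompact_Icc (a := (0:ℝ)) (b := Gp i)).bddBelow_image
      (hCg i).continuousOn
    exact ⟨m, fun g hg => hm ⟨g, hg, rfl⟩⟩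
  choose m hm using hb
  refine ⟨(∑ i, (P0 i) ^ 2 / (2 * (P0 i / ((1 - α i) * Q0 i))))
    + (∑ i, ((P0 i) ^ 2 / (2 * (P0 i / (α i * Q0 i))) - m i)) - 0, ?_⟩
  rintro x ⟨hd, hl, hzs, hzb, hg, hgih, hbal, hgc, hgihc, hy, hk, hn⟩
  unfold surplus
  refine sub_le_sub (add_le_add (Finset.sum_le_sum fun i _ => ?_)
    (Finset.sum_le_sum fun i _ => ?_)) ?_
  · have := quad_int_le (P0 i) (P0 i / ((1 - α i) * Q0 i)) (x.d i)
      (div_pos (hP0 i) (mul_pos (sub_pos.2 (hα1 i)) (hQ0 i)))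
    linarith
  · have := quad_int_le (P0 i) (P0 i / (α i * Q0 i)) (x.l i)
      (div_pos (hP0 i) (mul_pos (hα0 i) (hQ0 i)))
    have := hm i (x.g i) ⟨hg i, hgc i⟩
    linarith
  · refine Finset.sum_nonneg fun i _ => Finset.sum_nonneg fun h _ => ?_
    have := mul_nonneg (ha i h).le (hgih i h)
    have := mul_nonneg (hA i h).le (sq_nonneg (x.gih i h))
    linarith

theorem feas_nonempty {N K : ℕ} {H : Fin N → Type} [∀ i, Fintype (H i)]
    (Gcap : (i : Fin N) → H i → ℝ)
    (R Gp : Fin N → ℝ) (T : Fin K → ℝ) (PTDF : Fin K → Fin N → ℝ)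
    (hR : ∀ i, 0 < R i) (hGp : ∀ i, 0 ≤ Gp i)
    (hGcap : ∀ i (h : H i), 0 ≤ Gcap i h) (hT : ∀ k, 0 < T k) :
    ∃ x : LVec N H, FeasX R Gp Gcap T PTDF x := by
  refine ⟨⟨R, 0, R, 0, 0, fun _ _ => 0, 0⟩, ?_⟩
  simp [FeasX, hGp, hGcap, fun i => (hR i).le, fun k => (hT k).le]

theorem Vval_props {N K : ℕ} {H : Fin N → Type} [∀ i, Fintype (H i)]
    (P0 Q0 α : Fin N → ℝ) (Cg : Fin N → ℝ → ℝ) (a A Gcap : (i : Fin N) → H i → ℝ)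
    (R Gp : Fin N → ℝ) (T : Fin K → ℝ) (PTDF : Fin K → Fin N → ℝ)
    (hP0 : ∀ i, 0 < P0 i) (hQ0 : ∀ i, 0 < Q0 i)
    (hα0 : ∀ i, 0 < α i) (hα1 : ∀ i, α i < 1)
    (hCg : ∀ i, Continuous (Cg i))
    (ha : ∀ i (h : H i), 0 < a i h) (hA : ∀ i (h : H i), 0 < A i h)
    (hR : ∀ i, 0 < R i) (hGp : ∀ i, 0 ≤ Gp i)
    (hGcap : ∀ i (h : H i), 0 ≤ Gcap i h) (hT : ∀ k, 0 < T k) :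
    (∀ τ : ℝ × ℝ, 0 ≤ τ.1 → τ.2 ≤ τ.1 →
      ∀ x : LVec N H, FeasX R Gp Gcap T PTDF x →
        surplus P0 Q0 α Cg a A τ.1 τ.2 x ≤ Vval P0 Q0 α Cg a A Gcap R Gp T PTDF τ) ∧
    (∀ (τ : ℝ × ℝ) (B : ℝ), (∀ x : LVec N H, FeasX R Gp Gcap T PTDF x →
        surplus P0 Q0 α Cg a A τ.1 τ.2 x ≤ B) →
      Vval P0 Q0 α Cg a A Gcap R Gp T PTDF τ ≤ B) := by
  constructor
  · intro τ h0 h1 x hx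
    obtain ⟨B, hB⟩ := surplus_zero_bdd P0 Q0 α Cg a A Gcap R Gp T PTDF hP0 hQ0 hα0 hα1 hCg ha hA
    refine le_csSup ⟨B, ?_⟩ ⟨x, hx, rfl⟩
    rintro _ ⟨z, hz, rfl⟩
    exact (surplus_le_zero P0 Q0 α Cg a A Gcap R Gp T PTDF τ.1 τ.2 h0 h1 z hz).trans (hB z hz)
  · intro τ B hB
    obtain ⟨x, hx⟩ := feas_nonempty Gcap R Gp T PTDF hR hGp hGcap hT
    refine csSup_le ⟨_, x, hx, rfl⟩ ?_
    rintro _ ⟨z, hz, rfl⟩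
    exact hB z hz

/-- (Proposition 3: zero volumetric charges remain optimal under uncertainty.) The expected
optimal value function `EV` is convex on `𝒯` and is maximized over `𝒯` at `(0, 0)`,
regardless of the probability distribution of the random data. -/
theorem zero_volumetric_charge_optimal_stochastic
    (N K : ℕ) (hN : 1 ≤ N)
    (H : Fin N → Type) [∀ i, Fintype (H i)]
    (P0 Q0 α : Fin N → ℝ) (Cg : Fin N → ℝ → ℝ) (PTDF : Fin K → Fin N → ℝ)
    (hP0 : ∀ i, 0 < P0 i) (hQ0 : ∀ i, 0 < Q0 i)
    (hα0 : ∀ i, 0 < α i) (hα1 : ∀ i, α i < 1)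
    (hCg : ∀ i, ContDiff ℝ 1 (Cg i)) (hCgconv : ∀ i, StrictConvexOn ℝ Set.univ (Cg i))
    (Ω : Type) [MeasurableSpace Ω] (P : Measure Ω) [IsProbabilityMeasure P]
    (R Gp : Ω → Fin N → ℝ) (Gcap a A : Ω → (i : Fin N) → H i → ℝ)
    (T : Ω → Fin K → ℝ)
    (hRmeas : ∀ i, Measurable fun ω => R ω i)
    (hGpmeas : ∀ i, Measurable fun ω => Gp ω i)
    (hGcapmeas : ∀ i (h : H i), Measurable fun ω => Gcap ω i h)
    (hameas : ∀ i (h : H i), Measurable fun ω => a ω i h)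
    (hAmeas : ∀ i (h : H i), Measurable fun ω => A ω i h)
    (hTmeas : ∀ k, Measurable fun ω => T ω k)
    (hR : ∀ ω i, 0 < R ω i) (hGp : ∀ ω i, 0 ≤ Gp ω i)
    (hGcap : ∀ ω i (h : H i), 0 ≤ Gcap ω i h)
    (ha : ∀ ω i (h : H i), 0 < a ω i h) (hA : ∀ ω i (h : H i), 0 < A ω i h)
    (hT : ∀ ω k, 0 < T ω k)
    (τhat τlow : ℝ) (hτhat : 0 < τhat) (hτlow : τlow < 0)
    (hInt : ∀ τ ∈ Tset τhat τlow,
      Integrable (fun ω =>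
        Vval P0 Q0 α Cg (a ω) (A ω) (Gcap ω) (R ω) (Gp ω) (T ω) PTDF τ) P) :
    ConvexOn ℝ (Tset τhat τlow)
      (fun τ =>
        ∫ ω, Vval P0 Q0 α Cg (a ω) (A ω) (Gcap ω) (R ω) (Gp ω) (T ω) PTDF τ ∂P) ∧
    ∀ τ ∈ Tset τhat τlow,
      (∫ ω, Vval P0 Q0 α Cg (a ω) (A ω) (Gcap ω) (R ω) (Gp ω) (T ω) PTDF τ ∂P) ≤
      (∫ ω, Vval P0 Q0 α Cg (a ω) (A ω) (Gcap ω) (R ω) (Gp ω) (T ω) PTDF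
          ((0 : ℝ), (0 : ℝ)) ∂P) := by
  have key := fun ω => Vval_props P0 Q0 α Cg (a ω) (A ω) (Gcap ω) (R ω) (Gp ω) (T ω) PTDF
    hP0 hQ0 hα0 hα1 (fun i => (hCg i).continuous) (ha ω) (hA ω) (hR ω) (hGp ω) (hGcap ω) (hT ω)
  have hconv : Convex ℝ (Tset τhat τlow) := by
    rintro ⟨x1, x2⟩ ⟨hx1, hx2, hx3, hx4⟩ ⟨y1, y2⟩ ⟨hy1, hy2, hy3, hy4⟩ s t hs ht hst
    simp only at hx1 hx2 hx3 hx4 hy1 hy2 hy3 hy4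
    obtain rfl : t = 1 - s := by linarith
    simp only [Tset, Set.mem_setOf_eq, Prod.smul_mk, Prod.mk_add_mk, smul_eq_mul]
    refine ⟨?_, ?_, ?_, ?_⟩ <;> nlinarith
  refine ⟨⟨hconv, ?_⟩, ?_⟩
  · intro τ hτ σ hσ s t hs ht hst
    simp only [smul_eq_mul]
    rw [← integral_const_mul, ← integral_const_mul,
      ← integral_add ((hInt τ hτ).const_mul s) ((hInt σ hσ).const_mul t)]
    refine integral_mono (hInt _ (hconv hτ hσ hs ht hst))
      (((hInt τ hτ).const_mul s).add ((hInt σ hσ).const_mul t)) fun ω => ?_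
    refine (key ω).2 _ _ fun x hx => ?_
    have p1 := mul_le_mul_of_nonneg_left ((key ω).1 τ hτ.1 hτ.2.2.2 x hx) hs
    have p2 := mul_le_mul_of_nonneg_left ((key ω).1 σ hσ.1 hσ.2.2.2 x hx) ht
    refine le_trans (le_of_eq ?_) (add_le_add p1 p2)
    rw [surplus_affine, surplus_affine (τb := τ.1), surplus_affine (τb := σ.1)]
    obtain rfl : t = 1 - s := by linarith
    simp only [Prod.fst_add, Prod.snd_add, Prod.smul_fst, Prod.smul_snd, smul_eq_mul]
    ring
  · intro τ hτ
    have h00 : ((0 : ℝ), (0 : ℝ)) ∈ Tset τhat τlow := ⟨le_rfl, hτhat.le, hτlow.le, le_rfl⟩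
    refine integral_mono (hInt τ hτ) (hInt _ h00) fun ω => ?_
    refine (key ω).2 _ _ fun x hx => ?_
    exact (surplus_le_zero P0 Q0 α Cg (a ω) (A ω) (Gcap ω) (R ω) (Gp ω) (T ω) PTDF
      τ.1 τ.2 hτ.1 hτ.2.2.2 x hx).trans ((key ω).1 (0, 0) le_rfl le_rfl x hx)
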